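/- rad(M₆₆₆) = rad(D): the set of roots obtained by repeatedly reflecting the 16 roots of the M₆₆₆ diagram in each other equals the set obtained from the 26 roots of the diagram D. Consequently the group R₁ generated by the ω-reflections in the 16 M₆₆₆ roots equals the group R₂ generated by the ω-reflections in the 26 roots of D. -/

import Mathlib

noncomputable section

open ComplexConjugate

namespace Bimonster

/-- The primitive cube root of unity `ω = e^{2πi/3}`. -/
def ω : ℂ := Complex.exp (2 * (Real.pi : ℂ) * Complex.I / 3)

/-- `θ = ω - ω̄ = √-3`. -/
def θ : ℂ := ω - conj ω

/-- `ξ = e^{-πi/6}`. -/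
def ξ : ℂ := Complex.exp (-((Real.pi : ℂ) * Complex.I) / 6)

/-- Membership in the ring of Eisenstein integers `ℰ = ℤ[ω] ⊆ ℂ`. -/
def EisP (z : ℂ) : Prop := ∃ a b : ℤ, z = (a : ℂ) + (b : ℂ) * ω

/-- The units of the ring of Eisenstein integers. -/
def EisUnit (z : ℂ) : Prop :=
  z = 1 ∨ z = -1 ∨ z = ω ∨ z = -ω ∨ z = ω ^ 2 ∨ z = -ω ^ 2

/-- The underlying 14-dimensional complex vector space of `L = 3E₈ ⊕ H`. -/
abbrev V : Type := Fin 14 → ℂ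

/-- The Hermitian form of `L = 3E₈ ⊕ H`: negative definite standard form on the twelve
`E₈`-coordinates, and the hyperbolic cell with Gram matrix `[[0, θ̄], [θ, 0]]` on the
last two coordinates.  It is conjugate-linear in the first variable. -/
def herm (u v : V) : ℂ :=
  -(∑ i : Fin 12, conj (u (Fin.castLE (by norm_num) i)) * v (Fin.castLE (by norm_num) i)) +
    conj (u 12) * conj θ * v 13 + conj (u 13) * θ * v 12

/-- First generator of the ternary tetracode `𝒞₄ ⊆ 𝔽₃⁴`. -/
def tet1 : Fin 4 → ℤ := ![1, 1, -1, 0]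

/-- Second generator of the ternary tetracode `𝒞₄ ⊆ 𝔽₃⁴`. -/
def tet2 : Fin 4 → ℤ := ![0, 1, 1, 1]

/-- The complex `E₈` lattice: vectors of `ℰ⁴` whose reduction mod `θ` lies in the
ternary tetracode. -/
def inE8 (w : Fin 4 → ℂ) : Prop :=
  (∀ i, EisP (w i)) ∧
    ∃ s t : ℤ, ∀ i : Fin 4, ∃ a b : ℤ,
      w i - ((tet1 i * s + tet2 i * t : ℤ) : ℂ) = θ * ((a : ℂ) + (b : ℂ) * ω)

/-- The lattice `L = 3E₈ ⊕ H` as a subset of `ℂ¹⁴`. -/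
def Lset : Set V :=
  {v | (∀ k : Fin 3,
      inE8 fun i : Fin 4 =>
        v ⟨4 * (k : ℕ) + (i : ℕ), by have hk := k.isLt; have hi := i.isLt; omega⟩) ∧
    EisP (v 12) ∧ EisP (v 13)}

/-- A root of `L`: a primitive lattice vector of norm `-3`. -/
def IsRoot (r : V) : Prop :=
  r ∈ Lset ∧ herm r r = -3 ∧
    ∀ α : ℂ, EisP α → ∀ y ∈ Lset, r = α • y → EisUnit α

/-- The `μ`-reflection in a vector `r`: `v ↦ v − (1−μ)·r·⟨r,v⟩/|r|²`. -/
def reflMap (μ : ℂ) (r v : V) : V := v - ((1 - μ) * herm r v / herm r r) • r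

/-- The automorphism group of the lattice `L`: invertible `ℂ`-linear maps preserving
the lattice and the Hermitian form. -/
def AutL : Subgroup (V ≃ₗ[ℂ] V) where
  carrier := {g | (∀ v : V, v ∈ Lset ↔ g v ∈ Lset) ∧ ∀ u v : V, herm (g u) (g v) = herm u v}
  one_mem' := ⟨fun _ => Iff.rfl, fun _ _ => rfl⟩
  mul_mem' := by
    rintro f g ⟨hf1, hf2⟩ ⟨hg1, hg2⟩
    refine ⟨fun v => ?_, fun u v => ?_⟩
    · exact (hg1 v).trans (hf1 (g v))
    · exact (hf2 (g u) (g v)).trans (hg2 u v)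
  inv_mem' := by
    rintro g ⟨hg1, hg2⟩
    refine ⟨fun v => ?_, fun u v => ?_⟩
    · have h := hg1 (g.symm v)
      have hv : g (g.symm v) = v := g.apply_symm_apply v
      rw [hv] at h
      exact h.symm
    · have h := hg2 (g.symm u) (g.symm v)
      have hu : g (g.symm u) = u := g.apply_symm_apply u
      have hv : g (g.symm v) = v := g.apply_symm_apply v
      rw [hu, hv] at h
      exact h.symm

/-- The set of elements of `Aut(L)` acting as the `ω`-reflection in some root
belonging to `S`. -/
def ReflAutos (S : Set V) : Set (V ≃ₗ[ℂ] V) :=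
  {g | g ∈ AutL ∧ ∃ r ∈ S, ∀ v, g v = reflMap ω r v}

/-- The reflection group `R(L)`: the subgroup of `Aut(L)` generated by the
`ω`-reflections in all roots of `L`. -/
def RL : Subgroup (V ≃ₗ[ℂ] V) := Subgroup.closure (ReflAutos {r | IsRoot r})

/-- Two roots are adjacent when `|⟨a,b⟩| = √3`, i.e. when their `ω`-reflections braid. -/
def Adj (a b : V) : Prop := ‖herm a b‖ = Real.sqrt 3

/-- A set of roots is connected if the graph given by adjacency on it is connected. -/
def ConnectedSet (Φ : Set V) : Prop :=
  ∀ a ∈ Φ, ∀ b ∈ Φ, Relation.ReflTransGen (fun x y => x ∈ Φ ∧ y ∈ Φ ∧ Adj x y) a b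

/-- `Rad Φ` is the radical of a set `Φ` of roots: the closure of `Φ` under reflecting
members of the set in each other (and identification of unit multiples). -/
inductive Rad (Φ : Set V) : V → Prop
  | base {r : V} : r ∈ Φ → Rad Φ r
  | refl {a b : V} : Rad Φ a → Rad Φ b → Rad Φ (reflMap ω a b)
  | inv {a b : V} : Rad Φ a → Rad Φ b → Rad Φ (reflMap (conj ω) a b)
  | unit {u : ℂ} {r : V} : EisUnit u → Rad Φ r → Rad Φ (u • r)

/-- Shorthand for the entry `-θω²` occurring in the coordinates of the 26 roots. -/
def qc : ℂ := -(θ * ω ^ 2)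

/- The 26 roots of the diagram `D` in the coordinate system `3E₈ ⊕ H`. -/

def rA : V := ![0, 0, 0, 0, 0, 0, 0, 0, 0, 0, 0, 0, 1, ω ^ 2]
def rC1 : V := ![qc, 0, 0, 0, 0, 0, 0, 0, 0, 0, 0, 0, 0, 0]
def rC2 : V := ![0, 0, 0, 0, qc, 0, 0, 0, 0, 0, 0, 0, 0, 0]
def rC3 : V := ![0, 0, 0, 0, 0, 0, 0, 0, qc, 0, 0, 0, 0, 0]
def rE1 : V := ![0, qc, 0, 0, 0, 0, 0, 0, 0, 0, 0, 0, 0, 0]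
def rE2 : V := ![0, 0, 0, 0, 0, qc, 0, 0, 0, 0, 0, 0, 0, 0]
def rE3 : V := ![0, 0, 0, 0, 0, 0, 0, 0, 0, qc, 0, 0, 0, 0]
def rA1 : V := ![0, 0, 0, 0, 0, 0, 0, qc, 0, 0, 0, qc, ω, ω ^ 2]
def rA2 : V := ![0, 0, 0, qc, 0, 0, 0, 0, 0, 0, 0, qc, ω, ω ^ 2]
def rA3 : V := ![0, 0, 0, qc, 0, 0, 0, qc, 0, 0, 0, 0, ω, ω ^ 2]
def rG1 : V := ![0, 0, 0, qc, 0, 0, -qc, qc, 0, 0, -qc, qc, 2 * ω, 2 * ω ^ 2]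
def rG2 : V := ![0, 0, -qc, qc, 0, 0, 0, qc, 0, 0, -qc, qc, 2 * ω, 2 * ω ^ 2]
def rG3 : V := ![0, 0, -qc, qc, 0, 0, -qc, qc, 0, 0, 0, qc, 2 * ω, 2 * ω ^ 2]
def rF : V := ![0, 1, 1, -2, 0, 1, 1, -2, 0, 1, 1, -2, -2 + ω, -θ]
def rB1 : V := ![1, 0, 1, -1, 0, 0, 0, 0, 0, 0, 0, 0, -1, 0]
def rB2 : V := ![0, 0, 0, 0, 1, 0, 1, -1, 0, 0, 0, 0, -1, 0]
def rB3 : V := ![0, 0, 0, 0, 0, 0, 0, 0, 1, 0, 1, -1, -1, 0]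
def rD1 : V := ![1, 1, -1, 0, 0, 0, 0, 0, 0, 0, 0, 0, 0, 0]
def rD2 : V := ![0, 0, 0, 0, 1, 1, -1, 0, 0, 0, 0, 0, 0, 0]
def rD3 : V := ![0, 0, 0, 0, 0, 0, 0, 0, 1, 1, -1, 0, 0, 0]
def rF1 : V := ![0, 1, 1, 1, 0, 0, 0, 0, 0, 0, 0, 0, 0, 0]
def rF2 : V := ![0, 0, 0, 0, 0, 1, 1, 1, 0, 0, 0, 0, 0, 0]
def rF3 : V := ![0, 0, 0, 0, 0, 0, 0, 0, 0, 1, 1, 1, 0, 0]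
def rZ1 : V := ![0, 1, 1, -2, 1, 0, 1, -1, 1, 0, 1, -1, qc, -θ]
def rZ2 : V := ![1, 0, 1, -1, 0, 1, 1, -2, 1, 0, 1, -1, qc, -θ]
def rZ3 : V := ![1, 0, 1, -1, 1, 0, 1, -1, 0, 1, 1, -2, qc, -θ]

/-- The 13 roots of `D` labelled by the points of `P²(𝔽₃)`. -/
def pt : Fin 13 → V :=
  ![rA, rC1, rC2, rC3, rE1, rE2, rE3, rA1, rA2, rA3, rG1, rG2, rG3]

/-- The 13 roots of `D` labelled by the lines of `P²(𝔽₃)`. -/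
def lnr : Fin 13 → V :=
  ![rF, rB1, rB2, rB3, rD1, rD2, rD3, rF1, rF2, rF3, rZ1, rZ2, rZ3]

/-- The 26 roots of the diagram `D` (the incidence graph of `P²(𝔽₃)`). -/
def D26 : Set V := Set.range pt ∪ Set.range lnr

/-- The 16 roots forming the `M₆₆₆` diagram. -/
def M16 : Set V :=
  Set.range
    (![rA, rB1, rB2, rB3, rC1, rC2, rC3, rD1, rD2, rD3, rE1, rE2, rE3, rF1, rF2, rF3] :
      Fin 16 → V)

/-- The 26 vectors `(ρ₁,…,ρ₂₆) = (x₁,…,x₁₃, ξl₁,…,ξl₁₃)`. -/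
def ρv : Fin 26 → V := fun i =>
  if h : (i : ℕ) < 13 then pt ⟨(i : ℕ), h⟩
  else ξ • lnr ⟨(i : ℕ) - 13, by have := i.isLt; omega⟩

/-- The Weyl vector `ρ̄ = (Σ points + ξ Σ lines)/26`. -/
def ρbar : V := (26 : ℂ)⁻¹ • ((∑ i : Fin 13, pt i) + ξ • ∑ i : Fin 13, lnr i)

/-- The height of a root: `ht(r) = |⟨ρ̄, r⟩| / |ρ̄|²`. -/
def ht (r : V) : ℝ := ‖herm ρbar r‖ / ‖herm ρbar ρbar‖

set_option linter.all false
set_option linter.unusedSimpArgs false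
set_option linter.unreachableTactic false
set_option linter.unusedTactic false
set_option linter.unnecessarySeqFocus false

/-! ### Arithmetic of `ω` -/

lemma ω_val : ω = -1 / 2 + (Real.sqrt 3 / 2 : ℝ) * Complex.I := by
  have h : (2 * (Real.pi : ℂ) * Complex.I / 3) = ((Real.pi - Real.pi / 3 : ℝ) : ℂ) * Complex.I := by
    push_cast; ring
  rw [ω, h, Complex.exp_mul_I, ← Complex.ofReal_cos, ← Complex.ofReal_sin, Real.cos_pi_sub,
    Real.sin_pi_sub, Real.cos_pi_div_three, Real.sin_pi_div_three]
  push_cast; ring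

lemma conj_ω : conj ω = -1 - ω := by
  rw [ω_val]
  simp only [map_add, map_mul, Complex.conj_I, Complex.conj_ofReal, map_div₀, map_neg, map_one,
    map_ofNat]
  ring

lemma ω_sq : ω ^ 2 = -1 - ω := by
  have h3 : ((Real.sqrt 3 : ℝ) : ℂ) ^ 2 = 3 := by
    rw [← Complex.ofReal_pow, Real.sq_sqrt (by norm_num)]; norm_num
  rw [ω_val]
  push_cast
  linear_combination (Complex.I ^ 2 / 4) * h3 + (3 / 4 : ℂ) * Complex.I_sq

lemma θ_eq : θ = 1 + 2 * ω := by rw [θ, conj_ω]; ring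

lemma qc_eq : qc = -1 + ω := by
  rw [qc, θ_eq]; linear_combination (1 - 2 * ω) * ω_sq

lemma EisUnit.norm_one {u : ℂ} (h : EisUnit u) : conj u * u = 1 := by
  rcases h with rfl | rfl | rfl | rfl | rfl | rfl <;>
    simp only [map_neg, map_one, map_pow, conj_ω]
  · ring
  · ring
  · linear_combination -ω_sq
  · linear_combination -ω_sq
  · linear_combination (ω ^ 2 + ω - 1) * (ω_sq)
  · linear_combination (ω ^ 2 + ω - 1) * (ω_sq)

/-! ### An integer model of Eisenstein vectors -/

abbrev EZ : Type := ℤ × ℤ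
abbrev VZ : Type := Fin 14 → EZ

def eadd (x y : EZ) : EZ := (x.1 + y.1, x.2 + y.2)
def emul (x y : EZ) : EZ := (x.1 * y.1 - x.2 * y.2, x.1 * y.2 + x.2 * y.1 - x.2 * y.2)
def econj (x : EZ) : EZ := (x.1 - x.2, -x.2)
def eneg (x : EZ) : EZ := (-x.1, -x.2)

def emb (x : EZ) : ℂ := (x.1 : ℂ) + (x.2 : ℂ) * ω
def embV (u : VZ) : V := fun i => emb (u i)

lemma emb_add (x y : EZ) : emb (eadd x y) = emb x + emb y := by
  simp only [emb, eadd]; push_cast; ring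
lemma emb_neg (x : EZ) : emb (eneg x) = -emb x := by
  simp only [emb, eneg]; push_cast; ring
lemma emb_mul (x y : EZ) : emb (emul x y) = emb x * emb y := by
  simp only [emb, emul]; push_cast; linear_combination (-(x.2 : ℂ) * y.2) * ω_sq
lemma emb_conj (x : EZ) : emb (econj x) = conj (emb x) := by
  simp only [emb, econj, map_add, map_mul, conj_ω, map_intCast]
  push_cast; ring

lemma emb_unit_w : emb (0, 1) = ω := by simp [emb]
lemma emb_unit_m : emb (-1, 0) = -1 := by simp [emb]

def hermZ (u v : VZ) : EZ :=
  let p := fun i : Fin 14 => emul (econj (u i)) (v i)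
  eadd (eadd (eneg (eadd (eadd (eadd (eadd (eadd (eadd (eadd (eadd (eadd (eadd (eadd
    (p 0) (p 1)) (p 2)) (p 3)) (p 4)) (p 5)) (p 6)) (p 7)) (p 8)) (p 9)) (p 10)) (p 11)))
    (emul (emul (econj (u 12)) (-1, -2)) (v 13))) (emul (emul (econj (u 13)) (1, 2)) (v 12))

lemma herm_expand (u v : V) : herm u v =
    -(conj (u 0) * v 0 + conj (u 1) * v 1 + conj (u 2) * v 2 + conj (u 3) * v 3 +
      conj (u 4) * v 4 + conj (u 5) * v 5 + conj (u 6) * v 6 + conj (u 7) * v 7 +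
      conj (u 8) * v 8 + conj (u 9) * v 9 + conj (u 10) * v 10 + conj (u 11) * v 11) +
      conj (u 12) * (-1 - 2 * ω) * v 13 + conj (u 13) * (1 + 2 * ω) * v 12 := by
  have hθ : conj θ = -1 - 2 * ω := by
    rw [θ_eq]; simp only [map_add, map_mul, map_one, map_ofNat, conj_ω]; ring
  rw [herm, hθ, θ_eq]
  simp only [Fin.sum_univ_succ, Fin.sum_univ_zero]
  simp only [add_zero, add_assoc]
  rfl

lemma herm_emb (u v : VZ) : herm (embV u) (embV v) = emb (hermZ u v) := by
  rw [herm_expand]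
  simp only [hermZ, emb_add, emb_neg, emb_mul, emb_conj, embV]
  have h1 : emb (-1, -2) = -1 - 2 * ω := by simp [emb]; ring
  have h2 : emb (1, 2) = 1 + 2 * ω := by simp [emb]
  rw [h1, h2]

def addZ (c : EZ) (a x : VZ) : VZ := fun i => eadd (x i) (emul c (a i))

def sumZ : List (EZ × VZ) → VZ
  | [] => fun _ => (0, 0)
  | (c, a) :: l => addZ c a (sumZ l)

/-- Checks that a list of coefficients is produced by successive `ω`-reflections. -/
def chainOK : List (EZ × VZ) → Bool
  | [] => false
  | [(c, _)] => decide (c = (1, 0))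
  | (c, a) :: x :: l =>
    decide (hermZ a a = (-3, 0) ∧ emul (1, -1) (hermZ a (sumZ (x :: l))) = emul (3, 0) c) &&
      chainOK (x :: l)

lemma rad_chain (Φ : Set V) : ∀ l : List (EZ × VZ), chainOK l = true →
    (∀ p ∈ l, Rad Φ (embV p.2)) → Rad Φ (embV (sumZ l))
  | [], h, _ => by simp [chainOK] at h
  | [(c, a)], h, hr => by
    have hc : c = (1, 0) := by simpa [chainOK] using h
    have : sumZ [(c, a)] = a := by
      funext i; simp [sumZ, addZ, hc, eadd, emul]
    rw [this]
    exact hr (c, a) (by simp)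
  | (c, a) :: x :: l, h, hr => by
    simp only [chainOK, Bool.and_eq_true, decide_eq_true_eq] at h
    obtain ⟨⟨h1, h2⟩, h3⟩ := h
    have hx := rad_chain Φ (x :: l) h3 (fun p hp => hr p (List.mem_cons_of_mem _ hp))
    have ha := hr (c, a) (by simp)
    have key := Rad.refl ha hx
    convert key using 1
    have e2 := congrArg emb h2
    simp only [emb_mul] at e2
    have n1 : emb (1, -1) = 1 - ω := by simp [emb]; ring
    have n3 : emb (3, 0) = 3 := by simp [emb]
    have nm3 : emb (-3, 0) = -3 := by simp [emb]
    rw [n1, n3] at e2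
    funext i
    simp only [reflMap, herm_emb, h1, nm3, e2, Pi.sub_apply, Pi.smul_apply, smul_eq_mul]
    rw [sumZ]
    simp only [embV, addZ, emb_add, emb_mul]
    ring

lemma rad_gon {Φ : Set V} (u : EZ) (t : VZ) (l : List (EZ × VZ)) (h : chainOK l = true)
    (ht : ∀ i, t i = emul u (sumZ l i)) (hu : EisUnit (emb u))
    (hr : ∀ p ∈ l, Rad Φ (embV p.2)) : Rad Φ (embV t) := by
  have := Rad.unit hu (rad_chain Φ l h hr)
  convert this using 1
  funext i
  simp [embV, ht i, emb_mul]

def zA : VZ := ![(0, 0), (0, 0), (0, 0), (0, 0), (0, 0), (0, 0), (0, 0), (0, 0), (0, 0), (0, 0), (0, 0), (0, 0), (1, 0), (-1, -1)]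
def zC1 : VZ := ![(-1, 1), (0, 0), (0, 0), (0, 0), (0, 0), (0, 0), (0, 0), (0, 0), (0, 0), (0, 0), (0, 0), (0, 0), (0, 0), (0, 0)]
def zC2 : VZ := ![(0, 0), (0, 0), (0, 0), (0, 0), (-1, 1), (0, 0), (0, 0), (0, 0), (0, 0), (0, 0), (0, 0), (0, 0), (0, 0), (0, 0)]
def zC3 : VZ := ![(0, 0), (0, 0), (0, 0), (0, 0), (0, 0), (0, 0), (0, 0), (0, 0), (-1, 1), (0, 0), (0, 0), (0, 0), (0, 0), (0, 0)]
def zE1 : VZ := ![(0, 0), (-1, 1), (0, 0), (0, 0), (0, 0), (0, 0), (0, 0), (0, 0), (0, 0), (0, 0), (0, 0), (0, 0), (0, 0), (0, 0)]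
def zE2 : VZ := ![(0, 0), (0, 0), (0, 0), (0, 0), (0, 0), (-1, 1), (0, 0), (0, 0), (0, 0), (0, 0), (0, 0), (0, 0), (0, 0), (0, 0)]
def zE3 : VZ := ![(0, 0), (0, 0), (0, 0), (0, 0), (0, 0), (0, 0), (0, 0), (0, 0), (0, 0), (-1, 1), (0, 0), (0, 0), (0, 0), (0, 0)]
def zA1 : VZ := ![(0, 0), (0, 0), (0, 0), (0, 0), (0, 0), (0, 0), (0, 0), (-1, 1), (0, 0), (0, 0), (0, 0), (-1, 1), (0, 1), (-1, -1)]
def zA2 : VZ := ![(0, 0), (0, 0), (0, 0), (-1, 1), (0, 0), (0, 0), (0, 0), (0, 0), (0, 0), (0, 0), (0, 0), (-1, 1), (0, 1), (-1, -1)]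
def zA3 : VZ := ![(0, 0), (0, 0), (0, 0), (-1, 1), (0, 0), (0, 0), (0, 0), (-1, 1), (0, 0), (0, 0), (0, 0), (0, 0), (0, 1), (-1, -1)]
def zG1 : VZ := ![(0, 0), (0, 0), (0, 0), (-1, 1), (0, 0), (0, 0), (1, -1), (-1, 1), (0, 0), (0, 0), (1, -1), (-1, 1), (0, 2), (-2, -2)]
def zG2 : VZ := ![(0, 0), (0, 0), (1, -1), (-1, 1), (0, 0), (0, 0), (0, 0), (-1, 1), (0, 0), (0, 0), (1, -1), (-1, 1), (0, 2), (-2, -2)]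
def zG3 : VZ := ![(0, 0), (0, 0), (1, -1), (-1, 1), (0, 0), (0, 0), (1, -1), (-1, 1), (0, 0), (0, 0), (0, 0), (-1, 1), (0, 2), (-2, -2)]
def zF : VZ := ![(0, 0), (1, 0), (1, 0), (-2, 0), (0, 0), (1, 0), (1, 0), (-2, 0), (0, 0), (1, 0), (1, 0), (-2, 0), (-2, 1), (-1, -2)]
def zB1 : VZ := ![(1, 0), (0, 0), (1, 0), (-1, 0), (0, 0), (0, 0), (0, 0), (0, 0), (0, 0), (0, 0), (0, 0), (0, 0), (-1, 0), (0, 0)]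
def zB2 : VZ := ![(0, 0), (0, 0), (0, 0), (0, 0), (1, 0), (0, 0), (1, 0), (-1, 0), (0, 0), (0, 0), (0, 0), (0, 0), (-1, 0), (0, 0)]
def zB3 : VZ := ![(0, 0), (0, 0), (0, 0), (0, 0), (0, 0), (0, 0), (0, 0), (0, 0), (1, 0), (0, 0), (1, 0), (-1, 0), (-1, 0), (0, 0)]
def zD1 : VZ := ![(1, 0), (1, 0), (-1, 0), (0, 0), (0, 0), (0, 0), (0, 0), (0, 0), (0, 0), (0, 0), (0, 0), (0, 0), (0, 0), (0, 0)]
def zD2 : VZ := ![(0, 0), (0, 0), (0, 0), (0, 0), (1, 0), (1, 0), (-1, 0), (0, 0), (0, 0), (0, 0), (0, 0), (0, 0), (0, 0), (0, 0)]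
def zD3 : VZ := ![(0, 0), (0, 0), (0, 0), (0, 0), (0, 0), (0, 0), (0, 0), (0, 0), (1, 0), (1, 0), (-1, 0), (0, 0), (0, 0), (0, 0)]
def zF1 : VZ := ![(0, 0), (1, 0), (1, 0), (1, 0), (0, 0), (0, 0), (0, 0), (0, 0), (0, 0), (0, 0), (0, 0), (0, 0), (0, 0), (0, 0)]
def zF2 : VZ := ![(0, 0), (0, 0), (0, 0), (0, 0), (0, 0), (1, 0), (1, 0), (1, 0), (0, 0), (0, 0), (0, 0), (0, 0), (0, 0), (0, 0)]
def zF3 : VZ := ![(0, 0), (0, 0), (0, 0), (0, 0), (0, 0), (0, 0), (0, 0), (0, 0), (0, 0), (1, 0), (1, 0), (1, 0), (0, 0), (0, 0)]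
def zZ1 : VZ := ![(0, 0), (1, 0), (1, 0), (-2, 0), (1, 0), (0, 0), (1, 0), (-1, 0), (1, 0), (0, 0), (1, 0), (-1, 0), (-1, 1), (-1, -2)]
def zZ2 : VZ := ![(1, 0), (0, 0), (1, 0), (-1, 0), (0, 0), (1, 0), (1, 0), (-2, 0), (1, 0), (0, 0), (1, 0), (-1, 0), (-1, 1), (-1, -2)]
def zZ3 : VZ := ![(1, 0), (0, 0), (1, 0), (-1, 0), (1, 0), (0, 0), (1, 0), (-1, 0), (0, 0), (1, 0), (1, 0), (-2, 0), (-1, 1), (-1, -2)]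

set_option maxHeartbeats 1000000

lemma emb_zA : embV zA = rA := by
  funext i; fin_cases i <;> simp [embV, emb, zA, rA, qc_eq, θ_eq, ω_sq] <;> ring

lemma emb_zC1 : embV zC1 = rC1 := by
  funext i; fin_cases i <;> simp [embV, emb, zC1, rC1, qc_eq, θ_eq, ω_sq] <;> ring

lemma emb_zC2 : embV zC2 = rC2 := by
  funext i; fin_cases i <;> simp [embV, emb, zC2, rC2, qc_eq, θ_eq, ω_sq] <;> ring

lemma emb_zC3 : embV zC3 = rC3 := by
  funext i; fin_cases i <;> simp [embV, emb, zC3, rC3, qc_eq, θ_eq, ω_sq] <;> ring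

lemma emb_zE1 : embV zE1 = rE1 := by
  funext i; fin_cases i <;> simp [embV, emb, zE1, rE1, qc_eq, θ_eq, ω_sq] <;> ring

lemma emb_zE2 : embV zE2 = rE2 := by
  funext i; fin_cases i <;> simp [embV, emb, zE2, rE2, qc_eq, θ_eq, ω_sq] <;> ring

lemma emb_zE3 : embV zE3 = rE3 := by
  funext i; fin_cases i <;> simp [embV, emb, zE3, rE3, qc_eq, θ_eq, ω_sq] <;> ring

lemma emb_zA1 : embV zA1 = rA1 := by
  funext i; fin_cases i <;> simp [embV, emb, zA1, rA1, qc_eq, θ_eq, ω_sq] <;> ring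

lemma emb_zA2 : embV zA2 = rA2 := by
  funext i; fin_cases i <;> simp [embV, emb, zA2, rA2, qc_eq, θ_eq, ω_sq] <;> ring

lemma emb_zA3 : embV zA3 = rA3 := by
  funext i; fin_cases i <;> simp [embV, emb, zA3, rA3, qc_eq, θ_eq, ω_sq] <;> ring

lemma emb_zG1 : embV zG1 = rG1 := by
  funext i; fin_cases i <;> simp [embV, emb, zG1, rG1, qc_eq, θ_eq, ω_sq] <;> ring

lemma emb_zG2 : embV zG2 = rG2 := by
  funext i; fin_cases i <;> simp [embV, emb, zG2, rG2, qc_eq, θ_eq, ω_sq] <;> ring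

lemma emb_zG3 : embV zG3 = rG3 := by
  funext i; fin_cases i <;> simp [embV, emb, zG3, rG3, qc_eq, θ_eq, ω_sq] <;> ring

lemma emb_zF : embV zF = rF := by
  funext i; fin_cases i <;> simp [embV, emb, zF, rF, qc_eq, θ_eq, ω_sq] <;> ring

lemma emb_zB1 : embV zB1 = rB1 := by
  funext i; fin_cases i <;> simp [embV, emb, zB1, rB1, qc_eq, θ_eq, ω_sq] <;> ring

lemma emb_zB2 : embV zB2 = rB2 := by
  funext i; fin_cases i <;> simp [embV, emb, zB2, rB2, qc_eq, θ_eq, ω_sq] <;> ring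

lemma emb_zB3 : embV zB3 = rB3 := by
  funext i; fin_cases i <;> simp [embV, emb, zB3, rB3, qc_eq, θ_eq, ω_sq] <;> ring

lemma emb_zD1 : embV zD1 = rD1 := by
  funext i; fin_cases i <;> simp [embV, emb, zD1, rD1, qc_eq, θ_eq, ω_sq] <;> ring

lemma emb_zD2 : embV zD2 = rD2 := by
  funext i; fin_cases i <;> simp [embV, emb, zD2, rD2, qc_eq, θ_eq, ω_sq] <;> ring

lemma emb_zD3 : embV zD3 = rD3 := by
  funext i; fin_cases i <;> simp [embV, emb, zD3, rD3, qc_eq, θ_eq, ω_sq] <;> ring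

lemma emb_zF1 : embV zF1 = rF1 := by
  funext i; fin_cases i <;> simp [embV, emb, zF1, rF1, qc_eq, θ_eq, ω_sq] <;> ring

lemma emb_zF2 : embV zF2 = rF2 := by
  funext i; fin_cases i <;> simp [embV, emb, zF2, rF2, qc_eq, θ_eq, ω_sq] <;> ring

lemma emb_zF3 : embV zF3 = rF3 := by
  funext i; fin_cases i <;> simp [embV, emb, zF3, rF3, qc_eq, θ_eq, ω_sq] <;> ring

lemma emb_zZ1 : embV zZ1 = rZ1 := by
  funext i; fin_cases i <;> simp [embV, emb, zZ1, rZ1, qc_eq, θ_eq, ω_sq] <;> ring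

lemma emb_zZ2 : embV zZ2 = rZ2 := by
  funext i; fin_cases i <;> simp [embV, emb, zZ2, rZ2, qc_eq, θ_eq, ω_sq] <;> ring

lemma emb_zZ3 : embV zZ3 = rZ3 := by
  funext i; fin_cases i <;> simp [embV, emb, zZ3, rZ3, qc_eq, θ_eq, ω_sq] <;> ring


lemma rad_A : Rad M16 rA := Rad.base ⟨0, rfl⟩
lemma rad_B1 : Rad M16 rB1 := Rad.base ⟨1, rfl⟩
lemma rad_B2 : Rad M16 rB2 := Rad.base ⟨2, rfl⟩
lemma rad_B3 : Rad M16 rB3 := Rad.base ⟨3, rfl⟩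
lemma rad_C1 : Rad M16 rC1 := Rad.base ⟨4, rfl⟩
lemma rad_C2 : Rad M16 rC2 := Rad.base ⟨5, rfl⟩
lemma rad_C3 : Rad M16 rC3 := Rad.base ⟨6, rfl⟩
lemma rad_D1 : Rad M16 rD1 := Rad.base ⟨7, rfl⟩
lemma rad_D2 : Rad M16 rD2 := Rad.base ⟨8, rfl⟩
lemma rad_D3 : Rad M16 rD3 := Rad.base ⟨9, rfl⟩
lemma rad_E1 : Rad M16 rE1 := Rad.base ⟨10, rfl⟩
lemma rad_E2 : Rad M16 rE2 := Rad.base ⟨11, rfl⟩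
lemma rad_E3 : Rad M16 rE3 := Rad.base ⟨12, rfl⟩
lemma rad_F1 : Rad M16 rF1 := Rad.base ⟨13, rfl⟩
lemma rad_F2 : Rad M16 rF2 := Rad.base ⟨14, rfl⟩
lemma rad_F3 : Rad M16 rF3 := Rad.base ⟨15, rfl⟩

lemma rad_A1 : Rad M16 rA1 := by
  rw [← emb_zA1]
  refine rad_gon (0, 1) zA1
    [((1, 1), zF3), ((0, 1), zE3), ((0, 1), zD3), ((-1, 0), zC3), ((-1, 0), zB3), ((-1, -1), zA), ((-1, -1), zB2), ((0, -1), zC2), ((0, -1), zD2), ((1, 0), zE2), ((1, 0), zF2)]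
    (by decide +kernel) (by decide +kernel) (by rw [emb_unit_w]; exact Or.inr (Or.inr (Or.inl rfl))) ?_
  simp only [List.mem_cons, List.not_mem_nil, or_false, forall_eq_or_imp, forall_eq, Prod.forall, Prod.mk.injEq]
  simp only [emb_zF3, emb_zE3, emb_zD3, emb_zC3, emb_zB3, emb_zA, emb_zB2, emb_zC2, emb_zD2, emb_zE2, emb_zF2]
  exact ⟨rad_F3, rad_E3, rad_D3, rad_C3, rad_B3, rad_A, rad_B2, rad_C2, rad_D2, rad_E2, rad_F2⟩

lemma rad_A2 : Rad M16 rA2 := by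
  rw [← emb_zA2]
  refine rad_gon (0, 1) zA2
    [((1, 1), zF3), ((0, 1), zE3), ((0, 1), zD3), ((-1, 0), zC3), ((-1, 0), zB3), ((-1, -1), zA), ((-1, -1), zB1), ((0, -1), zC1), ((0, -1), zD1), ((1, 0), zE1), ((1, 0), zF1)]
    (by decide +kernel) (by decide +kernel) (by rw [emb_unit_w]; exact Or.inr (Or.inr (Or.inl rfl))) ?_
  simp only [List.mem_cons, List.not_mem_nil, or_false, forall_eq_or_imp, forall_eq, Prod.forall, Prod.mk.injEq]
  simp only [emb_zF3, emb_zE3, emb_zD3, emb_zC3, emb_zB3, emb_zA, emb_zB1, emb_zC1, emb_zD1, emb_zE1, emb_zF1]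
  exact ⟨rad_F3, rad_E3, rad_D3, rad_C3, rad_B3, rad_A, rad_B1, rad_C1, rad_D1, rad_E1, rad_F1⟩

lemma rad_A3 : Rad M16 rA3 := by
  rw [← emb_zA3]
  refine rad_gon (0, 1) zA3
    [((1, 1), zF1), ((0, 1), zE1), ((0, 1), zD1), ((-1, 0), zC1), ((-1, 0), zB1), ((-1, -1), zA), ((-1, -1), zB2), ((0, -1), zC2), ((0, -1), zD2), ((1, 0), zE2), ((1, 0), zF2)]
    (by decide +kernel) (by decide +kernel) (by rw [emb_unit_w]; exact Or.inr (Or.inr (Or.inl rfl))) ?_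
  simp only [List.mem_cons, List.not_mem_nil, or_false, forall_eq_or_imp, forall_eq, Prod.forall, Prod.mk.injEq]
  simp only [emb_zF1, emb_zE1, emb_zD1, emb_zC1, emb_zB1, emb_zA, emb_zB2, emb_zC2, emb_zD2, emb_zE2, emb_zF2]
  exact ⟨rad_F1, rad_E1, rad_D1, rad_C1, rad_B1, rad_A, rad_B2, rad_C2, rad_D2, rad_E2, rad_F2⟩

lemma rad_Z1 : Rad M16 rZ1 := by
  rw [← emb_zZ1]
  refine rad_gon (-1, 0) zZ1
    [((1, 1), zC3), ((1, 1), zD3), ((0, 1), zE3), ((0, 1), zF3), ((-1, 0), zA2), ((-1, 0), zF1), ((-1, -1), zA3), ((-1, -1), zF2), ((0, -1), zE2), ((0, -1), zD2), ((1, 0), zC2)]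
    (by decide +kernel) (by decide +kernel) (by rw [emb_unit_m]; exact Or.inr (Or.inl rfl)) ?_
  simp only [List.mem_cons, List.not_mem_nil, or_false, forall_eq_or_imp, forall_eq, Prod.forall, Prod.mk.injEq]
  simp only [emb_zC3, emb_zD3, emb_zE3, emb_zF3, emb_zA2, emb_zF1, emb_zA3, emb_zF2, emb_zE2, emb_zD2, emb_zC2]
  exact ⟨rad_C3, rad_D3, rad_E3, rad_F3, rad_A2, rad_F1, rad_A3, rad_F2, rad_E2, rad_D2, rad_C2⟩

lemma rad_Z2 : Rad M16 rZ2 := by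
  rw [← emb_zZ2]
  refine rad_gon (-1, 0) zZ2
    [((1, 1), zC3), ((1, 1), zD3), ((0, 1), zE3), ((0, 1), zF3), ((-1, 0), zA1), ((-1, 0), zB1), ((-1, -1), zA), ((-1, -1), zB2), ((0, -1), zC2), ((0, -1), zD2), ((1, 0), zE2)]
    (by decide +kernel) (by decide +kernel) (by rw [emb_unit_m]; exact Or.inr (Or.inl rfl)) ?_
  simp only [List.mem_cons, List.not_mem_nil, or_false, forall_eq_or_imp, forall_eq, Prod.forall, Prod.mk.injEq]
  simp only [emb_zC3, emb_zD3, emb_zE3, emb_zF3, emb_zA1, emb_zB1, emb_zA, emb_zB2, emb_zC2, emb_zD2, emb_zE2]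
  exact ⟨rad_C3, rad_D3, rad_E3, rad_F3, rad_A1, rad_B1, rad_A, rad_B2, rad_C2, rad_D2, rad_E2⟩

lemma rad_Z3 : Rad M16 rZ3 := by
  rw [← emb_zZ3]
  refine rad_gon (-1, 0) zZ3
    [((1, 1), zC1), ((1, 1), zB1), ((0, 1), zA), ((0, 1), zB2), ((-1, 0), zA2), ((-1, 0), zF1), ((-1, -1), zE1), ((-1, -1), zZ1), ((0, -1), zC3), ((0, -1), zD3), ((1, 0), zE3)]
    (by decide +kernel) (by decide +kernel) (by rw [emb_unit_m]; exact Or.inr (Or.inl rfl)) ?_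
  simp only [List.mem_cons, List.not_mem_nil, or_false, forall_eq_or_imp, forall_eq, Prod.forall, Prod.mk.injEq]
  simp only [emb_zC1, emb_zB1, emb_zA, emb_zB2, emb_zA2, emb_zF1, emb_zE1, emb_zZ1, emb_zC3, emb_zD3, emb_zE3]
  exact ⟨rad_C1, rad_B1, rad_A, rad_B2, rad_A2, rad_F1, rad_E1, rad_Z1, rad_C3, rad_D3, rad_E3⟩

lemma rad_G1 : Rad M16 rG1 := by
  rw [← emb_zG1]
  refine rad_gon (0, 1) zG1
    [((1, 1), zD2), ((0, 1), zC2), ((0, 1), zZ3), ((-1, 0), zE3), ((-1, 0), zF3), ((-1, -1), zA2), ((-1, -1), zZ2), ((0, -1), zC3), ((0, -1), zB3), ((1, 0), zA), ((1, 0), zB1)]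
    (by decide +kernel) (by decide +kernel) (by rw [emb_unit_w]; exact Or.inr (Or.inr (Or.inl rfl))) ?_
  simp only [List.mem_cons, List.not_mem_nil, or_false, forall_eq_or_imp, forall_eq, Prod.forall, Prod.mk.injEq]
  simp only [emb_zD2, emb_zC2, emb_zZ3, emb_zE3, emb_zF3, emb_zA2, emb_zZ2, emb_zC3, emb_zB3, emb_zA, emb_zB1]
  exact ⟨rad_D2, rad_C2, rad_Z3, rad_E3, rad_F3, rad_A2, rad_Z2, rad_C3, rad_B3, rad_A, rad_B1⟩

lemma rad_G2 : Rad M16 rG2 := by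
  rw [← emb_zG2]
  refine rad_gon (0, 1) zG2
    [((1, 1), zB2), ((0, 1), zC2), ((0, 1), zZ3), ((-1, 0), zE3), ((-1, 0), zF3), ((-1, -1), zA1), ((-1, -1), zB1), ((0, -1), zG1), ((0, -1), zF1), ((1, 0), zE1), ((1, 0), zD1)]
    (by decide +kernel) (by decide +kernel) (by rw [emb_unit_w]; exact Or.inr (Or.inr (Or.inl rfl))) ?_
  simp only [List.mem_cons, List.not_mem_nil, or_false, forall_eq_or_imp, forall_eq, Prod.forall, Prod.mk.injEq]
  simp only [emb_zB2, emb_zC2, emb_zZ3, emb_zE3, emb_zF3, emb_zA1, emb_zB1, emb_zG1, emb_zF1, emb_zE1, emb_zD1]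
  exact ⟨rad_B2, rad_C2, rad_Z3, rad_E3, rad_F3, rad_A1, rad_B1, rad_G1, rad_F1, rad_E1, rad_D1⟩

lemma rad_G3 : Rad M16 rG3 := by
  rw [← emb_zG3]
  refine rad_gon (0, 1) zG3
    [((1, 1), zD1), ((0, 1), zE1), ((0, 1), zF1), ((-1, 0), zG1), ((-1, 0), zD3), ((-1, -1), zE3), ((-1, -1), zZ3), ((0, -1), zC2), ((0, -1), zB2), ((1, 0), zA), ((1, 0), zB3)]
    (by decide +kernel) (by decide +kernel) (by rw [emb_unit_w]; exact Or.inr (Or.inr (Or.inl rfl))) ?_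
  simp only [List.mem_cons, List.not_mem_nil, or_false, forall_eq_or_imp, forall_eq, Prod.forall, Prod.mk.injEq]
  simp only [emb_zD1, emb_zE1, emb_zF1, emb_zG1, emb_zD3, emb_zE3, emb_zZ3, emb_zC2, emb_zB2, emb_zA, emb_zB3]
  exact ⟨rad_D1, rad_E1, rad_F1, rad_G1, rad_D3, rad_E3, rad_Z3, rad_C2, rad_B2, rad_A, rad_B3⟩

lemma rad_F : Rad M16 rF := by
  rw [← emb_zF]
  refine rad_gon (-1, 0) zF
    [((1, 1), zE2), ((1, 1), zD2), ((0, 1), zC2), ((0, 1), zZ3), ((-1, 0), zA3), ((-1, 0), zB3), ((-1, -1), zC3), ((-1, -1), zD3), ((0, -1), zG2), ((0, -1), zD1), ((1, 0), zE1)]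
    (by decide +kernel) (by decide +kernel) (by rw [emb_unit_m]; exact Or.inr (Or.inl rfl)) ?_
  simp only [List.mem_cons, List.not_mem_nil, or_false, forall_eq_or_imp, forall_eq, Prod.forall, Prod.mk.injEq]
  simp only [emb_zE2, emb_zD2, emb_zC2, emb_zZ3, emb_zA3, emb_zB3, emb_zC3, emb_zD3, emb_zG2, emb_zD1, emb_zE1]
  exact ⟨rad_E2, rad_D2, rad_C2, rad_Z3, rad_A3, rad_B3, rad_C3, rad_D3, rad_G2, rad_D1, rad_E1⟩


/-! ### Linear algebra of the form -/

lemma herm_add_right (u v w : V) : herm u (v + w) = herm u v + herm u w := by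
  simp only [herm_expand, Pi.add_apply]; ring

lemma herm_smul_right (u v : V) (c : ℂ) : herm u (c • v) = c * herm u v := by
  simp only [herm_expand, Pi.smul_apply, smul_eq_mul]; ring

lemma herm_symm (u v : V) : herm v u = conj (herm u v) := by
  simp only [herm_expand, map_add, map_sub, map_mul, map_neg, map_one, map_ofNat, conj_ω,
    Complex.conj_conj]
  ring

lemma herm_add_left (u v w : V) : herm (u + v) w = herm u w + herm v w := by
  rw [herm_symm w, herm_add_right, map_add, ← herm_symm, ← herm_symm]

lemma herm_smul_left (u v : V) (c : ℂ) : herm (c • u) v = conj c * herm u v := by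
  rw [herm_symm v, herm_smul_right, map_mul, ← herm_symm]

lemma reflMap_eq {r : V} (hr : herm r r = -3) (μ : ℂ) (v : V) :
    reflMap μ r v = v + ((1 - μ) * herm r v / 3) • r := by
  rw [reflMap, hr]
  funext i
  simp only [Pi.sub_apply, Pi.add_apply, Pi.smul_apply, smul_eq_mul]
  ring

lemma reflMap_inv {r : V} (hr : herm r r = -3) {μ ν : ℂ} (h : μ * ν = 1) (v : V) :
    reflMap μ r (reflMap ν r v) = v := by
  rw [reflMap_eq hr, reflMap_eq hr, herm_add_right, herm_smul_right, hr]
  funext i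
  simp only [Pi.add_apply, Pi.smul_apply, smul_eq_mul]
  linear_combination (-(herm r v) * r i / 3) * h

lemma herm_reflMap {r : V} (hr : herm r r = -3) {μ : ℂ} (h : conj μ * μ = 1) (u v : V) :
    herm (reflMap μ r u) (reflMap μ r v) = herm u v := by
  simp only [reflMap_eq hr, herm_add_right, herm_smul_right, herm_add_left, herm_smul_left, hr]
  rw [herm_symm r u]
  simp only [map_div₀, map_mul, map_sub, map_one, map_ofNat]
  linear_combination (-(conj (herm r u)) * herm r v / 3) * h

lemma ω_conj : ω * conj ω = 1 := by rw [conj_ω]; linear_combination -ω_sq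
lemma conj_ω' : conj ω * ω = 1 := by rw [conj_ω]; linear_combination -ω_sq

def reflEquiv (r : V) (hr : herm r r = -3) : V ≃ₗ[ℂ] V where
  toFun := reflMap ω r
  invFun := reflMap (conj ω) r
  map_add' u v := by
    simp only [reflMap_eq hr, herm_add_right]
    funext i
    simp only [Pi.add_apply, Pi.smul_apply, smul_eq_mul]
    ring
  map_smul' c v := by
    simp only [reflMap_eq hr, herm_smul_right, RingHom.id_apply]
    funext i
    simp only [Pi.add_apply, Pi.smul_apply, smul_eq_mul]
    ring
  left_inv v := reflMap_inv hr conj_ω' v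
  right_inv v := reflMap_inv hr ω_conj v

/-! ### The lattice -/

/-- Reduction modulo `θ`. -/
def ered (x : EZ) : ℤ := x.1 + x.2

def okZ (u : VZ) : Prop :=
  (3 ∣ ered (u 1) - ered (u 0) - ered (u 3) ∧ 3 ∣ ered (u 2) + ered (u 0) - ered (u 3)) ∧
  (3 ∣ ered (u 5) - ered (u 4) - ered (u 7) ∧ 3 ∣ ered (u 6) + ered (u 4) - ered (u 7)) ∧
  (3 ∣ ered (u 9) - ered (u 8) - ered (u 11) ∧ 3 ∣ ered (u 10) + ered (u 8) - ered (u 11))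

instance (u : VZ) : Decidable (okZ u) := by unfold okZ; infer_instance

lemma inE8_of (x : Fin 4 → EZ) (h1 : 3 ∣ ered (x 1) - ered (x 0) - ered (x 3))
    (h2 : 3 ∣ ered (x 2) + ered (x 0) - ered (x 3)) : inE8 (fun i => emb (x i)) := by
  refine ⟨fun i => ⟨(x i).1, (x i).2, rfl⟩, ered (x 0), ered (x 3), fun i => ?_⟩
  have key : ∃ m : ℤ, ered (x i) - (tet1 i * ered (x 0) + tet2 i * ered (x 3)) = 3 * m := by
    obtain ⟨m1, h1⟩ := h1
    obtain ⟨m2, h2⟩ := h2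
    fin_cases i
    · exact ⟨0, by simp [tet1, tet2]⟩
    · exact ⟨m1, by simp [tet1, tet2]; linarith⟩
    · exact ⟨m2, by simp [tet1, tet2]; linarith⟩
    · exact ⟨0, by simp [tet1, tet2]⟩
  obtain ⟨m, hm⟩ := key
  generalize tet1 i * ered (x 0) + tet2 i * ered (x 3) = n at hm ⊢
  have hm' : (x i).1 = n + 3 * m - (x i).2 := by simp only [ered] at hm; linarith
  refine ⟨(x i).2 - m, (x i).2 - 2 * m, ?_⟩
  show emb (x i) - (n : ℂ) = _
  rw [emb, hm', θ_eq]
  push_cast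
  linear_combination (-2 * ((x i).2 - 2 * m : ℂ)) * ω_sq

lemma of_inE8 (w : Fin 4 → ℂ) (h : inE8 w) : ∃ x : Fin 4 → EZ, (∀ i, w i = emb (x i)) ∧
    3 ∣ ered (x 1) - ered (x 0) - ered (x 3) ∧ 3 ∣ ered (x 2) + ered (x 0) - ered (x 3) := by
  obtain ⟨-, s, t, h⟩ := h
  choose a b h using h
  refine ⟨fun i => (tet1 i * s + tet2 i * t + (a i - 2 * b i), 2 * a i - b i), fun i => ?_, ?_, ?_⟩
  · have := h i
    rw [θ_eq] at this
    rw [emb]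
    push_cast at this ⊢
    linear_combination this + 2 * (b i : ℂ) * ω_sq
  · simp [ered, tet1, tet2]; omega
  · simp [ered, tet1, tet2]; omega

lemma embV_mem {u : VZ} (h : okZ u) : embV u ∈ Lset := by
  obtain ⟨⟨a1, a2⟩, ⟨b1, b2⟩, c1, c2⟩ := h
  refine ⟨fun k => ?_, ⟨_, _, rfl⟩, ⟨_, _, rfl⟩⟩
  fin_cases k
  · exact inE8_of ![u 0, u 1, u 2, u 3] a1 a2 |> fun h => by
      convert h using 2 with i
      fin_cases i <;> rfl
  · exact inE8_of ![u 4, u 5, u 6, u 7] b1 b2 |> fun h => by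
      convert h using 2 with i
      fin_cases i <;> rfl
  · exact inE8_of ![u 8, u 9, u 10, u 11] c1 c2 |> fun h => by
      convert h using 2 with i
      fin_cases i <;> rfl

lemma mem_Lset {v : V} (h : v ∈ Lset) : ∃ u : VZ, v = embV u ∧ okZ u := by
  obtain ⟨h, ⟨p, q, h12⟩, ⟨p', q', h13⟩⟩ := h
  obtain ⟨x, hx, x1, x2⟩ := of_inE8 _ (h 0)
  obtain ⟨y, hy, y1, y2⟩ := of_inE8 _ (h 1)
  obtain ⟨z, hz, z1, z2⟩ := of_inE8 _ (h 2)
  refine ⟨![x 0, x 1, x 2, x 3, y 0, y 1, y 2, y 3, z 0, z 1, z 2, z 3, (p, q), (p', q')], ?_,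
    ⟨x1, x2⟩, ⟨y1, y2⟩, z1, z2⟩
  funext i
  fin_cases i
  · exact hx 0
  · exact hx 1
  · exact hx 2
  · exact hx 3
  · exact hy 0
  · exact hy 1
  · exact hy 2
  · exact hy 3
  · exact hz 0
  · exact hz 1
  · exact hz 2
  · exact hz 3
  · exact h12
  · exact h13

lemma ered_add (x y : EZ) : ered (eadd x y) = ered x + ered y := by
  simp only [ered, eadd]; ring

lemma ered_mul (x y : EZ) : (3 : ℤ) ∣ ered (emul x y) - ered x * ered y :=
  ⟨-(x.2 * y.2), by simp only [ered, emul]; ring⟩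

lemma dvd_lin {c a1 a0 a3 x1 x0 x3 m1 m0 m3 : ℤ} (s : ℤ) (ha : 3 ∣ a1 + s * a0 - a3)
    (hx : 3 ∣ x1 + s * x0 - x3) (h1 : 3 ∣ m1 - c * a1) (h0 : 3 ∣ m0 - c * a0)
    (h3 : 3 ∣ m3 - c * a3) : 3 ∣ (x1 + m1) + s * (x0 + m0) - (x3 + m3) := by
  obtain ⟨A, ha⟩ := ha
  obtain ⟨X, hx⟩ := hx
  obtain ⟨k1, h1⟩ := h1
  obtain ⟨k0, h0⟩ := h0
  obtain ⟨k3, h3⟩ := h3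
  exact ⟨c * A + X + k1 + s * k0 - k3,
    by linear_combination c * ha + hx + h1 + s * h0 - h3⟩

lemma dvd_pair (c : EZ) (a x : VZ) (i0 i1 i2 i3 : Fin 14)
    (ha : 3 ∣ ered (a i1) - ered (a i0) - ered (a i3) ∧
      3 ∣ ered (a i2) + ered (a i0) - ered (a i3))
    (hx : 3 ∣ ered (x i1) - ered (x i0) - ered (x i3) ∧
      3 ∣ ered (x i2) + ered (x i0) - ered (x i3)) :
    3 ∣ ered (addZ c a x i1) - ered (addZ c a x i0) - ered (addZ c a x i3) ∧
      3 ∣ ered (addZ c a x i2) + ered (addZ c a x i0) - ered (addZ c a x i3) := by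
  simp only [addZ, ered_add]
  constructor
  · have := dvd_lin (-1) (by simpa [sub_eq_add_neg] using ha.1) (by simpa [sub_eq_add_neg] using hx.1)
      (ered_mul c (a i1)) (ered_mul c (a i0)) (ered_mul c (a i3))
    convert this using 1; ring
  · have := dvd_lin 1 (by simpa using ha.2) (by simpa using hx.2)
      (ered_mul c (a i2)) (ered_mul c (a i0)) (ered_mul c (a i3))
    convert this using 1; ring

lemma okZ_add (c : EZ) {a x : VZ} (ha : okZ a) (hx : okZ x) : okZ (addZ c a x) :=
  ⟨dvd_pair c a x _ _ _ _ ha.1 hx.1, dvd_pair c a x _ _ _ _ ha.2.1 hx.2.1,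
    dvd_pair c a x _ _ _ _ ha.2.2 hx.2.2⟩

lemma block_dvd {x y : VZ} (i0 i1 i2 i3 : Fin 14)
    (hx : 3 ∣ ered (x i1) - ered (x i0) - ered (x i3) ∧
      3 ∣ ered (x i2) + ered (x i0) - ered (x i3))
    (hy : 3 ∣ ered (y i1) - ered (y i0) - ered (y i3) ∧
      3 ∣ ered (y i2) + ered (y i0) - ered (y i3)) :
    3 ∣ ered (emul (econj (x i0)) (y i0)) + ered (emul (econj (x i1)) (y i1)) +
      ered (emul (econj (x i2)) (y i2)) + ered (emul (econj (x i3)) (y i3)) := by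
  have hp : ∀ a b : EZ, ∃ m : ℤ, ered (emul (econj a) b) = ered a * ered b + 3 * m := fun a b =>
    ⟨-a.2 * b.1, by simp only [ered, emul, econj]; ring⟩
  obtain ⟨m0, h0⟩ := hp (x i0) (y i0)
  obtain ⟨m1, h1⟩ := hp (x i1) (y i1)
  obtain ⟨m2, h2⟩ := hp (x i2) (y i2)
  obtain ⟨m3, h3⟩ := hp (x i3) (y i3)
  obtain ⟨⟨p1, hp1⟩, p2, hp2⟩ := hx
  obtain ⟨⟨q1, hq1⟩, q2, hq2⟩ := hy
  rw [h0, h1, h2, h3]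
  generalize ered (x i0) = X0 at *
  generalize ered (x i1) = X1 at *
  generalize ered (x i2) = X2 at *
  generalize ered (x i3) = X3 at *
  generalize ered (y i0) = Y0 at *
  generalize ered (y i1) = Y1 at *
  generalize ered (y i2) = Y2 at *
  generalize ered (y i3) = Y3 at *
  have e1 : X1 = X0 + X3 + 3 * p1 := by linarith
  have e2 : X2 = X3 - X0 + 3 * p2 := by linarith
  have f1 : Y1 = Y0 + Y3 + 3 * q1 := by linarith
  have f2 : Y2 = Y3 - Y0 + 3 * q2 := by linarith
  subst e1 e2 f1 f2
  exact ⟨X0 * Y0 + X3 * Y3 + (X0 + X3) * q1 + p1 * (Y0 + Y3) + 3 * p1 * q1 + (X3 - X0) * q2 +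
    p2 * (Y3 - Y0) + 3 * p2 * q2 + m0 + m1 + m2 + m3, by ring⟩

lemma hermZ_dvd {x y : VZ} (hx : okZ x) (hy : okZ y) : 3 ∣ ered (hermZ x y) := by
  have h1 := block_dvd _ _ _ _ hx.1 hy.1
  have h2 := block_dvd _ _ _ _ hx.2.1 hy.2.1
  have h3 := block_dvd _ _ _ _ hx.2.2 hy.2.2
  have hn : ∀ a, ered (eneg a) = -ered a := fun a => by simp only [ered, eneg]; ring
  have ht : ∀ a b : EZ, 3 ∣ ered (emul (emul a (1, 2)) b) := fun a b =>
    ⟨b.1 * (a.1 - a.2) - a.1 * b.2,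
      by simp only [ered, emul]; ring⟩
  have ht' : ∀ a b : EZ, 3 ∣ ered (emul (emul a (-1, -2)) b) := fun a b => by
    have := ht a b
    rw [← Int.dvd_neg] at this
    convert this using 1
    simp only [ered, emul]; ring
  have h4 := ht' (econj (x 12)) (y 13)
  have h5 := ht (econj (x 13)) (y 12)
  simp only [hermZ, ered_add, hn]
  omega

lemma reflMap_mem {r v : V} (hr : r ∈ Lset) (hn : herm r r = -3) (hv : v ∈ Lset) :
    reflMap ω r v ∈ Lset ∧ reflMap (conj ω) r v ∈ Lset := by
  obtain ⟨a, rfl, ha⟩ := mem_Lset hr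
  obtain ⟨x, rfl, hx⟩ := mem_Lset hv
  obtain ⟨m, hm⟩ := hermZ_dvd ha hx
  rw [reflMap_eq hn, reflMap_eq hn, herm_emb]
  generalize hermZ a x = h at hm ⊢
  obtain ⟨p, q⟩ := h
  simp only [ered] at hm
  have hp : p = 3 * m - q := by linarith
  subst hp
  constructor
  · have := embV_mem (okZ_add (m, q - m) ha hx)
    convert this using 1
    funext i
    simp only [Pi.add_apply, Pi.smul_apply, smul_eq_mul, embV, addZ, emb_add, emb_mul]
    simp only [emb]
    push_cast
    linear_combination (-(q : ℂ) / 3 * (((a i).1 : ℂ) + (a i).2 * ω)) * ω_sq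
  · have := embV_mem (okZ_add (2 * m - q, m) ha hx)
    convert this using 1
    funext i
    simp only [Pi.add_apply, Pi.smul_apply, smul_eq_mul, embV, addZ, emb_add, emb_mul, conj_ω]
    simp only [emb]
    push_cast
    linear_combination ((q : ℂ) / 3 * (((a i).1 : ℂ) + (a i).2 * ω)) * ω_sq

lemma refl_mem_AutL {r : V} (hr : r ∈ Lset) (hn : herm r r = -3) (g : V ≃ₗ[ℂ] V)
    (hg : ∀ v, g v = reflMap ω r v) : g ∈ AutL := by
  refine ⟨fun v => ⟨fun hv => ?_, fun hv => ?_⟩, fun u v => ?_⟩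
  · rw [hg]; exact (reflMap_mem hr hn hv).1
  · have := (reflMap_mem hr hn hv).2
    rwa [hg, reflMap_inv hn conj_ω'] at this
  · rw [hg, hg, herm_reflMap hn conj_ω']

lemma AutL_reflMap {h : V ≃ₗ[ℂ] V} (hh : h ∈ AutL) (μ : ℂ) (b x : V) :
    reflMap μ (h b) (h x) = h (reflMap μ b x) := by
  have h2 := hh.2
  simp only [reflMap, h2, map_sub, map_smul]

lemma good_emb (u : VZ) (h : okZ u) (hn : hermZ u u = (-3, 0)) :
    embV u ∈ Lset ∧ herm (embV u) (embV u) = -3 :=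
  ⟨embV_mem h, by rw [herm_emb, hn]; simp [emb]⟩

lemma good_A : rA ∈ Lset ∧ herm rA rA = -3 := by
  rw [← emb_zA]; exact good_emb zA (by decide +kernel) (by decide +kernel)
lemma good_B1 : rB1 ∈ Lset ∧ herm rB1 rB1 = -3 := by
  rw [← emb_zB1]; exact good_emb zB1 (by decide +kernel) (by decide +kernel)
lemma good_B2 : rB2 ∈ Lset ∧ herm rB2 rB2 = -3 := by
  rw [← emb_zB2]; exact good_emb zB2 (by decide +kernel) (by decide +kernel)
lemma good_B3 : rB3 ∈ Lset ∧ herm rB3 rB3 = -3 := by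
  rw [← emb_zB3]; exact good_emb zB3 (by decide +kernel) (by decide +kernel)
lemma good_C1 : rC1 ∈ Lset ∧ herm rC1 rC1 = -3 := by
  rw [← emb_zC1]; exact good_emb zC1 (by decide +kernel) (by decide +kernel)
lemma good_C2 : rC2 ∈ Lset ∧ herm rC2 rC2 = -3 := by
  rw [← emb_zC2]; exact good_emb zC2 (by decide +kernel) (by decide +kernel)
lemma good_C3 : rC3 ∈ Lset ∧ herm rC3 rC3 = -3 := by
  rw [← emb_zC3]; exact good_emb zC3 (by decide +kernel) (by decide +kernel)
lemma good_D1 : rD1 ∈ Lset ∧ herm rD1 rD1 = -3 := by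
  rw [← emb_zD1]; exact good_emb zD1 (by decide +kernel) (by decide +kernel)
lemma good_D2 : rD2 ∈ Lset ∧ herm rD2 rD2 = -3 := by
  rw [← emb_zD2]; exact good_emb zD2 (by decide +kernel) (by decide +kernel)
lemma good_D3 : rD3 ∈ Lset ∧ herm rD3 rD3 = -3 := by
  rw [← emb_zD3]; exact good_emb zD3 (by decide +kernel) (by decide +kernel)
lemma good_E1 : rE1 ∈ Lset ∧ herm rE1 rE1 = -3 := by
  rw [← emb_zE1]; exact good_emb zE1 (by decide +kernel) (by decide +kernel)
lemma good_E2 : rE2 ∈ Lset ∧ herm rE2 rE2 = -3 := by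
  rw [← emb_zE2]; exact good_emb zE2 (by decide +kernel) (by decide +kernel)
lemma good_E3 : rE3 ∈ Lset ∧ herm rE3 rE3 = -3 := by
  rw [← emb_zE3]; exact good_emb zE3 (by decide +kernel) (by decide +kernel)
lemma good_F1 : rF1 ∈ Lset ∧ herm rF1 rF1 = -3 := by
  rw [← emb_zF1]; exact good_emb zF1 (by decide +kernel) (by decide +kernel)
lemma good_F2 : rF2 ∈ Lset ∧ herm rF2 rF2 = -3 := by
  rw [← emb_zF2]; exact good_emb zF2 (by decide +kernel) (by decide +kernel)
lemma good_F3 : rF3 ∈ Lset ∧ herm rF3 rF3 = -3 := by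
  rw [← emb_zF3]; exact good_emb zF3 (by decide +kernel) (by decide +kernel)

lemma good_M16 {r : V} (hr : r ∈ M16) : r ∈ Lset ∧ herm r r = -3 := by
  obtain ⟨i, rfl⟩ := hr
  fin_cases i
  · exact good_A
  · exact good_B1
  · exact good_B2
  · exact good_B3
  · exact good_C1
  · exact good_C2
  · exact good_C3
  · exact good_D1
  · exact good_D2
  · exact good_D3
  · exact good_E1
  · exact good_E2
  · exact good_E3
  · exact good_F1
  · exact good_F2
  · exact good_F3

lemma rad_group {v : V} (hv : Rad M16 v) : v ∈ Lset ∧ herm v v = -3 ∧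
    ∀ g : V ≃ₗ[ℂ] V, (∀ x, g x = reflMap ω v x) → g ∈ Subgroup.closure (ReflAutos M16) := by
  have conj_case : ∀ (f : V ≃ₗ[ℂ] V) (b : V), f ∈ AutL → f ∈ Subgroup.closure (ReflAutos M16) →
      (b ∈ Lset ∧ herm b b = -3 ∧
        ∀ g : V ≃ₗ[ℂ] V, (∀ x, g x = reflMap ω b x) → g ∈ Subgroup.closure (ReflAutos M16)) →
      (f b ∈ Lset ∧ herm (f b) (f b) = -3 ∧
        ∀ g : V ≃ₗ[ℂ] V, (∀ x, g x = reflMap ω (f b) x) →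
          g ∈ Subgroup.closure (ReflAutos M16)) := by
    rintro f b hf hfc ⟨b1, b2, b3⟩
    refine ⟨(hf.1 b).1 b1, by rw [hf.2, b2], fun g hg => ?_⟩
    have hb := b3 (reflEquiv b b2) (fun _ => rfl)
    have : g = f * reflEquiv b b2 * f⁻¹ := by
      refine LinearEquiv.ext fun x => ?_
      have h1 : g x = reflMap ω (f b) (f (f⁻¹ x)) := by
        rw [hg]; congr 1; exact (f.apply_symm_apply x).symm
      rw [h1, AutL_reflMap hf]
      rfl
    rw [this]
    exact mul_mem (mul_mem hfc hb) (inv_mem hfc)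
  induction hv with
  | base hr =>
    obtain ⟨h1, h2⟩ := good_M16 hr
    exact ⟨h1, h2, fun g hg => Subgroup.subset_closure ⟨refl_mem_AutL h1 h2 g hg, _, hr, hg⟩⟩
  | refl _ _ iha ihb =>
    obtain ⟨a1, a2, a3⟩ := iha
    exact conj_case (reflEquiv _ a2) _ (refl_mem_AutL a1 a2 _ fun _ => rfl)
      (a3 _ fun _ => rfl) ihb
  | inv _ _ iha ihb =>
    obtain ⟨a1, a2, a3⟩ := iha
    exact conj_case (reflEquiv _ a2)⁻¹ _ (inv_mem (refl_mem_AutL a1 a2 _ fun _ => rfl))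
      (inv_mem (a3 _ fun _ => rfl)) ihb
  | @unit u r hu _ ih =>
    obtain ⟨a1, a2, a3⟩ := ih
    have hn : herm (u • r) (u • r) = -3 := by
      rw [herm_smul_left, herm_smul_right, ← mul_assoc, hu.norm_one, one_mul, a2]
    refine ⟨?_, hn, fun g hg => a3 g fun x => ?_⟩
    · obtain ⟨x, rfl, hx⟩ := mem_Lset a1
      have hz : okZ (fun _ => (0, 0)) := by decide +kernel
      have hue : ∃ c : EZ, u = emb c := by
        rcases hu with rfl | rfl | rfl | rfl | rfl | rfl
        · exact ⟨(1, 0), by simp [emb]⟩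
        · exact ⟨(-1, 0), by simp [emb]⟩
        · exact ⟨(0, 1), by simp [emb]⟩
        · exact ⟨(0, -1), by simp [emb]⟩
        · exact ⟨(-1, -1), by simp [emb, ω_sq]; ring⟩
        · exact ⟨(1, 1), by simp [emb, ω_sq]; ring⟩
      obtain ⟨c, rfl⟩ := hue
      have := embV_mem (okZ_add c hx hz)
      convert this using 1
      funext i
      simp only [Pi.smul_apply, smul_eq_mul, embV, addZ, emb_add, emb_mul]
      simp [emb]
    · rw [hg, reflMap_eq hn, reflMap_eq a2, herm_smul_left, smul_smul]
      congr 2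
      linear_combination ((1 - ω) * herm r x / 3) * hu.norm_one

lemma rad_D26 {r : V} (hr : r ∈ D26) : Rad M16 r := by
  rcases hr with ⟨i, rfl⟩ | ⟨i, rfl⟩
  · fin_cases i
    · exact rad_A
    · exact rad_C1
    · exact rad_C2
    · exact rad_C3
    · exact rad_E1
    · exact rad_E2
    · exact rad_E3
    · exact rad_A1
    · exact rad_A2
    · exact rad_A3
    · exact rad_G1
    · exact rad_G2
    · exact rad_G3
  · fin_cases i
    · exact rad_F
    · exact rad_B1
    · exact rad_B2
    · exact rad_B3
    · exact rad_D1
    · exact rad_D2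
    · exact rad_D3
    · exact rad_F1
    · exact rad_F2
    · exact rad_F3
    · exact rad_Z1
    · exact rad_Z2
    · exact rad_Z3

lemma sub_A : rA ∈ D26 := Or.inl ⟨0, by simp [pt]⟩
lemma sub_B1 : rB1 ∈ D26 := Or.inr ⟨1, by simp [lnr]⟩
lemma sub_B2 : rB2 ∈ D26 := Or.inr ⟨2, by simp [lnr]⟩
lemma sub_B3 : rB3 ∈ D26 := Or.inr ⟨3, by simp [lnr]⟩
lemma sub_C1 : rC1 ∈ D26 := Or.inl ⟨1, by simp [pt]⟩
lemma sub_C2 : rC2 ∈ D26 := Or.inl ⟨2, by simp [pt]⟩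
lemma sub_C3 : rC3 ∈ D26 := Or.inl ⟨3, by simp [pt]⟩
lemma sub_D1 : rD1 ∈ D26 := Or.inr ⟨4, by simp [lnr]⟩
lemma sub_D2 : rD2 ∈ D26 := Or.inr ⟨5, by simp [lnr]⟩
lemma sub_D3 : rD3 ∈ D26 := Or.inr ⟨6, by simp [lnr]⟩
lemma sub_E1 : rE1 ∈ D26 := Or.inl ⟨4, by simp [pt]⟩
lemma sub_E2 : rE2 ∈ D26 := Or.inl ⟨5, by simp [pt]⟩
lemma sub_E3 : rE3 ∈ D26 := Or.inl ⟨6, by simp [pt]⟩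
lemma sub_F1 : rF1 ∈ D26 := Or.inr ⟨7, by simp [lnr]⟩
lemma sub_F2 : rF2 ∈ D26 := Or.inr ⟨8, by simp [lnr]⟩
lemma sub_F3 : rF3 ∈ D26 := Or.inr ⟨9, by simp [lnr]⟩

lemma M16_sub : M16 ⊆ D26 := by
  rintro _ ⟨i, rfl⟩
  fin_cases i
  · exact sub_A
  · exact sub_B1
  · exact sub_B2
  · exact sub_B3
  · exact sub_C1
  · exact sub_C2
  · exact sub_C3
  · exact sub_D1
  · exact sub_D2
  · exact sub_D3
  · exact sub_E1
  · exact sub_E2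
  · exact sub_E3
  · exact sub_F1
  · exact sub_F2
  · exact sub_F3

lemma rad_of_rad {Φ Ψ : Set V} (h : ∀ r ∈ Φ, Rad Ψ r) {v : V} (hv : Rad Φ v) : Rad Ψ v := by
  induction hv with
  | base hr => exact h _ hr
  | refl _ _ iha ihb => exact Rad.refl iha ihb
  | inv _ _ iha ihb => exact Rad.inv iha ihb
  | unit hu _ ih => exact Rad.unit hu ih

/-- `rad(M₆₆₆) = rad(D)`, and consequently the group `R₁` generated by the
`ω`-reflections in the 16 roots of the `M₆₆₆` diagram equals the group `R₂`
generated by the `ω`-reflections in the 26 roots of `D`. -/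
theorem stmt3 :
    (∀ v : V, Rad M16 v ↔ Rad D26 v) ∧
    Subgroup.closure (ReflAutos M16) = Subgroup.closure (ReflAutos D26) := by
  refine ⟨fun v => ⟨rad_of_rad fun r hr => Rad.base (M16_sub hr),
    rad_of_rad fun r hr => rad_D26 hr⟩, le_antisymm ?_ ?_⟩
  · refine Subgroup.closure_mono ?_
    rintro g ⟨hg, r, hr, h⟩
    exact ⟨hg, r, M16_sub hr, h⟩
  · rw [Subgroup.closure_le]
    rintro g ⟨-, r, hr, h⟩
    exact (rad_group (rad_D26 hr)).2.2 g h

end Bimonster
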